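/- arXiv:2203.03663 — 2 statements merged into one kernel-verified Lean document; each statement's English description precedes it below -/
import Mathlib

section
/- In the segment construction's intersection graph G, there exist indices i, j ∈ [n] such that a_i and b_j are orthogonal if and only if diam(G) ≥ 4. -/
/-- Vertices of the segment construction for vectors `a₁,…,aₙ, b₁,…,bₙ ∈ {0,1}^d`
(coordinates are indexed by `k ∈ [d] = {1,…,d}`):
the points `ā i = (i,1)` and `b̄ j = (j,−1)`, the segment `ℓ`, the segments `e i k`
(present iff `(a i) k = 1`) and the segments `e' j k` (present iff `(b j) k = 1`). -/
inductive SegVert (n d : ℕ) (a b : Fin n → ℕ → Bool) : Type where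
  | A (i : Fin n)
  | B (j : Fin n)
  | L
  | E (i : Fin n) (k : ℕ) (hk : k ∈ Finset.Icc 1 d) (h : a i k = true)
  | E' (j : Fin n) (k : ℕ) (hk : k ∈ Finset.Icc 1 d) (h : b j k = true)

/-- The closed segment in `ℝ²` corresponding to each vertex of the construction:
`ā i` is the single point `(i, 1)` (for `i ∈ [n]`), `b̄ j` is the single point `(j, −1)`,
`ℓ` goes from `(1,0)` to `(d,0)`, `e i k` goes from `(i,1)` to `(k,0)`, and
`e' j k` goes from `(j,−1)` to `(k,0)`. -/
noncomputable def segOf {n d : ℕ} {a b : Fin n → ℕ → Bool} :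
    SegVert n d a b → Set (ℝ × ℝ)
  | .A i => {(((i : ℕ) : ℝ) + 1, 1)}
  | .B j => {(((j : ℕ) : ℝ) + 1, -1)}
  | .L => segment ℝ ((1 : ℝ), (0 : ℝ)) ((d : ℝ), (0 : ℝ))
  | .E i k _ _ => segment ℝ (((i : ℕ) : ℝ) + 1, (1 : ℝ)) ((k : ℝ), (0 : ℝ))
  | .E' j k _ _ => segment ℝ (((j : ℕ) : ℝ) + 1, (-1 : ℝ)) ((k : ℝ), (0 : ℝ))

/-- The intersection graph of the segment construction: two distinct segments are adjacent
iff they have a common point. -/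
noncomputable def segGraph (n d : ℕ) (a b : Fin n → ℕ → Bool) :
    SimpleGraph (SegVert n d a b) :=
  SimpleGraph.fromRel fun u v => (segOf u ∩ segOf v).Nonempty


/-- Two `{0,1}`-vectors with coordinates indexed by `[d] = {1,…,d}` are orthogonal iff there
is no coordinate `k ∈ [d]` where both equal `1`. -/
def Orth (d : ℕ) (u v : ℕ → Bool) : Prop :=
  ¬ ∃ k ∈ Finset.Icc 1 d, u k = true ∧ v k = true

theorem nonneg_and_fst_eq_of_mem_segOf_E {n d : ℕ} {a b : Fin n → ℕ → Bool} {i : Fin n} {k : ℕ}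
    {hk : k ∈ Finset.Icc 1 d} {h : a i k = true} {p : ℝ × ℝ}
    (hp : p ∈ segOf (SegVert.E (b := b) i k hk h)) :
    0 ≤ p.2 ∧ p.1 = p.2 * ((i : ℕ) + 1) + (1 - p.2) * k := by
  obtain ⟨s, t, hs, ht, hst, rfl⟩ := hp
  obtain rfl : t = 1 - s := by linarith
  simp [hs]

theorem nonpos_and_fst_eq_of_mem_segOf_E' {n d : ℕ} {a b : Fin n → ℕ → Bool} {j : Fin n} {k : ℕ}
    {hk : k ∈ Finset.Icc 1 d} {h : b j k = true} {p : ℝ × ℝ}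
    (hp : p ∈ segOf (SegVert.E' (a := a) j k hk h)) :
    p.2 ≤ 0 ∧ p.1 = -p.2 * ((j : ℕ) + 1) + (1 + p.2) * k := by
  obtain ⟨s, t, hs, ht, hst, rfl⟩ := hp
  obtain rfl : t = 1 - s := by linarith
  simp [hs, sub_eq_add_neg]

theorem snd_eq_zero_of_mem_segOf_L {n d : ℕ} {a b : Fin n → ℕ → Bool} {p : ℝ × ℝ}
    (hp : p ∈ segOf (SegVert.L : SegVert n d a b)) : p.2 = 0 := by
  obtain ⟨s, t, hs, ht, hst, rfl⟩ := hp
  simp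

theorem mem_segOf_L {n d : ℕ} {a b : Fin n → ℕ → Bool} {k : ℕ} (hk : k ∈ Finset.Icc 1 d) :
    ((k : ℝ), (0 : ℝ)) ∈ segOf (SegVert.L : SegVert n d a b) := by
  obtain ⟨h1, h2⟩ := Finset.mem_Icc.mp hk
  have h : (k : ℝ) ∈ segment ℝ (1 : ℝ) d := by
    rw [segment_eq_Icc (by exact_mod_cast h1.trans h2)]
    exact ⟨by exact_mod_cast h1, by exact_mod_cast h2⟩
  obtain ⟨s, t, hs, ht, hst, hk'⟩ := h
  exact ⟨s, t, hs, ht, hst, by simpa using hk'⟩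

theorem segGraph_adj_iff {n d : ℕ} {a b : Fin n → ℕ → Bool} {u v : SegVert n d a b} :
    (segGraph n d a b).Adj u v ↔ u ≠ v ∧ ∃ p, p ∈ segOf u ∧ p ∈ segOf v := by
  rw [segGraph, SimpleGraph.fromRel_adj, Set.inter_comm (segOf v), or_self]
  rfl

/-- Segments with a common point are at distance at most one (zero if they coincide). -/
theorem segGraph_edist_le_one {n d : ℕ} {a b : Fin n → ℕ → Bool} {u v : SegVert n d a b}
    (p : ℝ × ℝ) (hu : p ∈ segOf u) (hv : p ∈ segOf v) : (segGraph n d a b).edist u v ≤ 1 := by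
  by_cases h : u = v
  · simp [h]
  · exact (SimpleGraph.edist_eq_one_iff_adj.mpr (segGraph_adj_iff.mpr ⟨h, p, hu, hv⟩)).le

theorem eq_E_of_adj_A {n d : ℕ} {a b : Fin n → ℕ → Bool} {i : Fin n} {v : SegVert n d a b}
    (hv : (segGraph n d a b).Adj (.A i) v) : ∃ k hk h, v = .E i k hk h := by
  obtain ⟨hne, p, rfl, hp⟩ := segGraph_adj_iff.mp hv
  cases v with
  | A i' =>
    have : (i : ℕ) = i' := by simpa [segOf] using hp
    exact absurd (congrArg _ (Fin.ext this)) hne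
  | B j => norm_num [segOf] at hp
  | L => exact absurd (snd_eq_zero_of_mem_segOf_L hp) one_ne_zero
  | E i' k hk h =>
    obtain rfl : i = i' := Fin.ext (by simpa using (nonneg_and_fst_eq_of_mem_segOf_E hp).2)
    exact ⟨k, hk, h, rfl⟩
  | E' j k hk h =>
    have := (nonpos_and_fst_eq_of_mem_segOf_E' hp).1
    norm_num at this

theorem eq_E'_of_adj_B {n d : ℕ} {a b : Fin n → ℕ → Bool} {j : Fin n} {v : SegVert n d a b}
    (hv : (segGraph n d a b).Adj (.B j) v) : ∃ k hk h, v = .E' j k hk h := by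
  obtain ⟨hne, p, rfl, hp⟩ := segGraph_adj_iff.mp hv
  cases v with
  | A i => norm_num [segOf] at hp
  | B j' =>
    have : (j : ℕ) = j' := by simpa [segOf] using hp
    exact absurd (congrArg _ (Fin.ext this)) hne
  | L => exact absurd (snd_eq_zero_of_mem_segOf_L hp) (by norm_num)
  | E i k hk h =>
    have := (nonneg_and_fst_eq_of_mem_segOf_E hp).1
    norm_num at this
  | E' j' k hk h =>
    obtain rfl : j = j' := Fin.ext (by simpa using (nonpos_and_fst_eq_of_mem_segOf_E' hp).2)
    exact ⟨k, hk, h, rfl⟩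

theorem eq_of_adj_E_E' {n d : ℕ} {a b : Fin n → ℕ → Bool} {i j : Fin n} {k l : ℕ}
    {hk : k ∈ Finset.Icc 1 d} {h : a i k = true} {hl : l ∈ Finset.Icc 1 d} {h' : b j l = true}
    (hadj : (segGraph n d a b).Adj (.E i k hk h) (.E' j l hl h')) : k = l := by
  obtain ⟨-, p, hp, hp'⟩ := segGraph_adj_iff.mp hadj
  obtain ⟨h1, h2⟩ := nonneg_and_fst_eq_of_mem_segOf_E hp
  obtain ⟨h3, h4⟩ := nonpos_and_fst_eq_of_mem_segOf_E' hp'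
  have h0 : p.2 = 0 := le_antisymm h3 h1
  rw [h2, h0] at h4
  simpa using h4

theorem four_le_edist_of_orth {n d : ℕ} {a b : Fin n → ℕ → Bool} {i j : Fin n}
    (h : Orth d (a i) (b j)) : 4 ≤ (segGraph n d a b).edist (.A i) (.B j) := by
  refine le_iInf fun w => ?_
  by_contra! hw
  replace hw : w.length < 4 := by exact_mod_cast hw
  match w, hw with
  | .cons h1 .nil, _ =>
    obtain ⟨k, hk, hak, hv⟩ := eq_E_of_adj_A h1
    cases hv
  | .cons h1 (.cons h2 .nil), _ =>
    obtain ⟨k, hk, hak, rfl⟩ := eq_E_of_adj_A h1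
    obtain ⟨l, hl, hbl, hv⟩ := eq_E'_of_adj_B h2.symm
    cases hv
  | .cons h1 (.cons h2 (.cons h3 .nil)), _ =>
    obtain ⟨k, hk, hak, rfl⟩ := eq_E_of_adj_A h1
    obtain ⟨l, hl, hbl, rfl⟩ := eq_E'_of_adj_B h3.symm
    obtain rfl := eq_of_adj_E_E' h2
    exact h ⟨k, hk, hak, hbl⟩
  | .cons _ (.cons _ (.cons _ (.cons _ _))), hw =>
    simp only [SimpleGraph.Walk.length_cons] at hw
    omega

theorem edist_le_three_of_not_orth {n d : ℕ} (hd : 2 ≤ d) {a b : Fin n → ℕ → Bool}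
    (ha1 : ∀ i, a i (d - 1) = true) (hb2 : ∀ j, b j d = true)
    (horth : ∀ i j, ¬ Orth d (a i) (b j)) (u v : SegVert n d a b) :
    (segGraph n d a b).edist u v ≤ 3 := by
  have hd1 : d - 1 ∈ Finset.Icc 1 d := Finset.mem_Icc.mpr ⟨by omega, by omega⟩
  have hdd : d ∈ Finset.Icc 1 d := Finset.mem_Icc.mpr ⟨by omega, le_rfl⟩
  have three {u v : SegVert n d a b} (x y : SegVert n d a b)
      (h1 : (segGraph n d a b).edist u x ≤ 1) (h2 : (segGraph n d a b).edist x y ≤ 1)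
      (h3 : (segGraph n d a b).edist y v ≤ 1) : (segGraph n d a b).edist u v ≤ 3 :=
    calc _ ≤ _ := SimpleGraph.edist_triangle (v := x)
      _ ≤ _ + (_ + _) := add_le_add_right (SimpleGraph.edist_triangle (v := y)) _
      _ ≤ 1 + (1 + 1) := add_le_add h1 (add_le_add h2 h3)
      _ = 3 := by norm_num
  have hAE (i : Fin n) (k hk h) : (segGraph n d a b).edist (.A i) (.E i k hk h) ≤ 1 :=
    segGraph_edist_le_one _ rfl (left_mem_segment ..)
  have hBE (j : Fin n) (k hk h) : (segGraph n d a b).edist (.B j) (.E' j k hk h) ≤ 1 :=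
    segGraph_edist_le_one _ rfl (left_mem_segment ..)
  have hEL (i : Fin n) (k hk h) : (segGraph n d a b).edist (.E i k hk h) .L ≤ 1 :=
    segGraph_edist_le_one _ (right_mem_segment ..) (mem_segOf_L hk)
  have hEL' (j : Fin n) (k hk h) : (segGraph n d a b).edist (.E' j k hk h) .L ≤ 1 :=
    segGraph_edist_le_one _ (right_mem_segment ..) (mem_segOf_L hk)
  have hAB (i j : Fin n) : (segGraph n d a b).edist (.A i) (.B j) ≤ 3 := by
    obtain ⟨k, hk, hak, hbk⟩ := not_not.mp (horth i j)
    refine three (.E i k hk hak) (.E' j k hk hbk) (hAE ..) ?_ ?_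
    · exact segGraph_edist_le_one _ (right_mem_segment ..) (right_mem_segment ..)
    · rw [SimpleGraph.edist_comm]; exact hBE ..
  have toL (u : SegVert n d a b) :
      ∃ x, (segGraph n d a b).edist u x ≤ 1 ∧ (segGraph n d a b).edist x .L ≤ 1 := by
    cases u with
    | A i => exact ⟨_, hAE i _ hd1 (ha1 i), hEL ..⟩
    | B j => exact ⟨_, hBE j _ hdd (hb2 j), hEL' ..⟩
    | L => exact ⟨.L, by simp, by simp⟩
    | E i k hk h => exact ⟨_, hEL .., by simp⟩
    | E' j k hk h => exact ⟨_, hEL' .., by simp⟩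
  have viaL {u v : SegVert n d a b} (hv : (segGraph n d a b).edist v .L ≤ 1) :
      (segGraph n d a b).edist u v ≤ 3 := by
    obtain ⟨x, hx, hxL⟩ := toL u
    exact three x .L hx hxL (by rwa [SimpleGraph.edist_comm])
  cases v with
  | L => exact viaL (by simp)
  | E i k hk h => exact viaL (hEL ..)
  | E' j k hk h => exact viaL (hEL' ..)
  | A i =>
    cases u with
    | L => rw [SimpleGraph.edist_comm]; exact viaL (by simp)
    | E i k hk h => rw [SimpleGraph.edist_comm]; exact viaL (hEL ..)
    | E' j k hk h => rw [SimpleGraph.edist_comm]; exact viaL (hEL' ..)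
    | A i' =>
      refine three _ _ (hAE i' _ hd1 (ha1 i')) ?_
        (SimpleGraph.edist_comm.trans_le (hAE i _ hd1 (ha1 i)))
      exact segGraph_edist_le_one _ (right_mem_segment ..) (right_mem_segment ..)
    | B j => rw [SimpleGraph.edist_comm]; exact hAB ..
  | B j =>
    cases u with
    | L => rw [SimpleGraph.edist_comm]; exact viaL (by simp)
    | E i k hk h => rw [SimpleGraph.edist_comm]; exact viaL (hEL ..)
    | E' j k hk h => rw [SimpleGraph.edist_comm]; exact viaL (hEL' ..)
    | A i => exact hAB ..
    | B j' =>
      refine three _ _ (hBE j' _ hdd (hb2 j')) ?_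
        (SimpleGraph.edist_comm.trans_le (hBE j _ hdd (hb2 j)))
      exact segGraph_edist_le_one _ (right_mem_segment ..) (right_mem_segment ..)

/-- The sets `A`, `B` contain an orthogonal pair iff the diameter of the
segment construction's intersection graph is at least `4`. -/
theorem segGraph_orth_iff_diam_ge_four (n d : ℕ) (hn : 1 ≤ n) (hd : 2 ≤ d)
    (a b : Fin n → ℕ → Bool)
    (ha1 : ∀ i, a i (d - 1) = true) (ha2 : ∀ i, a i d = false)
    (hb1 : ∀ j, b j (d - 1) = false) (hb2 : ∀ j, b j d = true) :
    (∃ i j : Fin n, Orth d (a i) (b j)) ↔ 4 ≤ (segGraph n d a b).ediam := by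
  refine ⟨fun ⟨i, j, h⟩ => (four_le_edist_of_orth h).trans SimpleGraph.edist_le_ediam, fun h => ?_⟩
  by_contra! horth
  have h3 := h.trans (SimpleGraph.ediam_le_of_edist_le (edist_le_three_of_not_orth hd ha1 hb2 horth))
  exact absurd h3 (by decide)
end

section
/- The graph G(A) can be realized as an intersection graph of axis-parallel unit cubes in ℝ³: there exists an injective map c from the vertex set of G(A) to ℝ³ such that two distinct vertices u, v are adjacent in G(A) if and only if the ℓ∞-distance between c(u) and c(v) is at most 1 (equivalently, the closed axis-parallel cubes of side length 1 centered at c(u) and c(v) intersect). -/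
/-- Vertices of the graph `G(A)` for vectors `a₁,…,aₙ ∈ {0,1}^d` (coordinates indexed by
`Fin d`, cliques `C^T_k, C^B_k` indexed by `Fin (2*d)`): `vT k i`, `vB k i` always exist,
`mT k i`, `mB k i` exist iff `(a i) k = 1`, and `q k` for `k ∈ [d]`. -/
inductive GAVert (n d : ℕ) (a : Fin n → Fin d → Bool) : Type where
  | vT (k : Fin (2 * d)) (i : Fin n)
  | vB (k : Fin (2 * d)) (i : Fin n)
  | mT (k : Fin d) (i : Fin n) (h : a i k = true)
  | mB (k : Fin d) (i : Fin n) (h : a i k = true)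
  | q (k : Fin d)

/-- Base relation generating exactly the edges of `G(A)`: each `C^T_k`, `C^B_k`, `M^T_k`,
`M^B_k` is a clique, there are perfect matchings between consecutive `C^T`s and consecutive
`C^B`s, `m^T_{k,i} ~ v^T_{2k,i}`, `m^B_{k,i} ~ v^B_{2k-1,i}` (in `1`-based indexing, which is
`(k':ℕ) = 2*k+1` resp. `(k':ℕ) = 2*k` in the `0`-based indexing used here), and `q k` is
adjacent to all of `M^T_k ∪ M^B_k`. -/
def gaRel {n d : ℕ} {a : Fin n → Fin d → Bool} : GAVert n d a → GAVert n d a → Prop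
  | .vT k i, .vT k' i' => k = k' ∨ ((k' : ℕ) = (k : ℕ) + 1 ∧ i = i')
  | .vB k i, .vB k' i' => k = k' ∨ ((k' : ℕ) = (k : ℕ) + 1 ∧ i = i')
  | .mT k _ _, .mT k' _ _ => k = k'
  | .mB k _ _, .mB k' _ _ => k = k'
  | .mT k i _, .vT k' i' => (k' : ℕ) = 2 * (k : ℕ) + 1 ∧ i' = i
  | .mB k i _, .vB k' i' => (k' : ℕ) = 2 * (k : ℕ) ∧ i' = i
  | .q k, .mT k' _ _ => k = k'
  | .q k, .mB k' _ _ => k = k'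
  | _, _ => False

/-- The graph `G(A)`. -/
def gaGraph (n d : ℕ) (a : Fin n → Fin d → Bool) : SimpleGraph (GAVert n d a) :=
  SimpleGraph.fromRel gaRel

/-- Centers of the cubes: both chains run along the diagonal of the `xy`-plane, the `T`-chain at
height about `0` and the `B`-chain at height about `18/5`; the vertices `m` and `q` lie between
them. The perturbation `e i` encodes the index `i`. -/
noncomputable def gaCenter {n d : ℕ} {a : Fin n → Fin d → Bool} (e : Fin n → ℝ) :
    GAVert n d a → Fin 3 → ℝ
  | .vT k i => ![(k : ℕ) + e i, (k : ℕ) - e i, e i]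
  | .vB k i => ![((k + 1 : ℕ) : ℝ) + e i, ((k + 1 : ℕ) : ℝ) - e i, 18 / 5 - e i]
  | .mT k i _ => ![2 * (k : ℕ) + 1 / 2, 2 * (k : ℕ) + 2 - e i, 1 + e i]
  | .mB k i _ => ![2 * (k : ℕ) + 1 / 2, 2 * (k : ℕ) + 2 - e i, 13 / 5 - e i]
  | .q k => ![2 * (k : ℕ) + 1 / 2, 2 * (k : ℕ) + 2, 9 / 5]

theorem dist_fin_three_le_one (x y : Fin 3 → ℝ) :
    dist x y ≤ 1 ↔ |x 0 - y 0| ≤ 1 ∧ |x 1 - y 1| ≤ 1 ∧ |x 2 - y 2| ≤ 1 := by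
  rw [dist_pi_le_iff zero_le_one]
  simp [Fin.forall_fin_succ, Real.dist_eq]

/-- Two centers on the same chain are close iff they are in the same clique or matched. -/
theorem chain_close_iff (k l : ℕ) {s t : ℝ} (hs : 0 ≤ s ∧ s < 1 / 10) (ht : 0 ≤ t ∧ t < 1 / 10) :
    (|k + s - (l + t)| ≤ 1 ∧ |k - s - (l - t)| ≤ 1 ∧ |s - t| ≤ 1) ↔
      k = l ∨ (l = k + 1 ∧ s = t) ∨ (k = l + 1 ∧ t = s) := by
  obtain ⟨hs0, hs1⟩ := hs
  obtain ⟨ht0, ht1⟩ := ht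
  simp only [abs_le]
  constructor
  · rintro ⟨⟨h1, h2⟩, ⟨h3, h4⟩, -⟩
    have hl : l < k + 2 := by
      have : (l : ℝ) < (k + 2 : ℕ) := by push_cast; linarith
      exact_mod_cast this
    have hk : k < l + 2 := by
      have : (k : ℝ) < (l + 2 : ℕ) := by push_cast; linarith
      exact_mod_cast this
    obtain rfl | rfl | rfl : k = l ∨ l = k + 1 ∨ k = l + 1 := by omega
    · exact .inl rfl
    · push_cast at *
      exact .inr (.inl ⟨rfl, by linarith⟩)
    · push_cast at *
      exact .inr (.inr ⟨rfl, by linarith⟩)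
  · rintro (rfl | ⟨rfl, rfl⟩ | ⟨rfl, rfl⟩) <;> push_cast <;>
      refine ⟨⟨?_, ?_⟩, ⟨?_, ?_⟩, ?_, ?_⟩ <;> linarith

/-- The center of an `m`-vertex is close to a center on its chain iff the two are matched. -/
theorem hook_close_iff (k l : ℕ) {s t : ℝ} (hs : 0 ≤ s ∧ s < 1 / 10) (ht : 0 ≤ t ∧ t < 1 / 10) :
    (|2 * k + 1 / 2 - (l + t)| ≤ 1 ∧ |2 * k + 2 - s - (l - t)| ≤ 1 ∧ |1 + s - t| ≤ 1) ↔
      l = 2 * k + 1 ∧ t = s := by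
  obtain ⟨hs0, hs1⟩ := hs
  obtain ⟨ht0, ht1⟩ := ht
  simp only [abs_le]
  constructor
  · rintro ⟨⟨h1, h2⟩, ⟨h3, h4⟩, h5, h6⟩
    have hl : l < 2 * k + 2 := by
      have : (l : ℝ) < (2 * k + 2 : ℕ) := by push_cast; linarith
      exact_mod_cast this
    have hk : 2 * k < l := by
      have : ((2 * k : ℕ) : ℝ) < l := by push_cast; linarith
      exact_mod_cast this
    obtain rfl : l = 2 * k + 1 := by omega
    push_cast at *
    exact ⟨rfl, by linarith⟩
  · rintro ⟨rfl, rfl⟩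
    push_cast
    refine ⟨⟨?_, ?_⟩, ⟨?_, ?_⟩, ?_, ?_⟩ <;> linarith

/-- Centers of `m`- and `q`-vertices with nearby heights are close iff they have the same `k`. -/
theorem middle_close_iff (k l : ℕ) {s t z : ℝ} (hs : 0 ≤ s ∧ s < 1 / 10)
    (ht : 0 ≤ t ∧ t < 1 / 10) (hz : |z| ≤ 1) :
    (|2 * (k : ℝ) + 1 / 2 - (2 * l + 1 / 2)| ≤ 1 ∧ |2 * (k : ℝ) + 2 - s - (2 * l + 2 - t)| ≤ 1 ∧
      |z| ≤ 1) ↔ k = l := by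
  obtain ⟨hs0, hs1⟩ := hs
  obtain ⟨ht0, ht1⟩ := ht
  simp only [hz, and_true, abs_le]
  constructor
  · rintro ⟨⟨h1, h2⟩, -⟩
    have hl : l < k + 1 := by
      have : (l : ℝ) < (k + 1 : ℕ) := by push_cast; linarith
      exact_mod_cast this
    have hk : k < l + 1 := by
      have : (k : ℝ) < (l + 1 : ℕ) := by push_cast; linarith
      exact_mod_cast this
    omega
  · rintro rfl
    refine ⟨⟨?_, ?_⟩, ?_, ?_⟩ <;> linarith

section Center

variable {n d : ℕ} {a : Fin n → Fin d → Bool} {e : Fin n → ℝ}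

theorem gaCenter_injective (he : ∀ i, 0 ≤ e i ∧ e i < 1 / 10) (hinj : Function.Injective e) :
    Function.Injective (gaCenter (a := a) e) := by
  intro u v h
  have h0 := congrFun h 0
  have h1 := congrFun h 1
  have h2 := congrFun h 2
  rcases u with ⟨k, i⟩ | ⟨k, i⟩ | ⟨k, i, hi⟩ | ⟨k, i, hi⟩ | k <;>
    rcases v with ⟨l, j⟩ | ⟨l, j⟩ | ⟨l, j, hj⟩ | ⟨l, j, hj⟩ | l <;>
    simp only [gaCenter, Matrix.cons_val] at h0 h1 h2 <;>
    first
    | have hi' := he i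
      have hj' := he j
      exfalso; linarith
    | have hi' := he i
      exfalso; linarith
    | have hj' := he j
      exfalso; linarith
    | obtain rfl : i = j := hinj (by linarith)
      obtain rfl : k = l := Fin.ext (by
        push_cast at h0
        exact_mod_cast (by linarith : ((k : ℕ) : ℝ) = (l : ℕ)))
      rfl
    | obtain rfl : k = l := Fin.ext (by exact_mod_cast (by linarith : ((k : ℕ) : ℝ) = (l : ℕ)))
      rfl

theorem vT_vT_close_iff (he : ∀ i, 0 ≤ e i ∧ e i < 1 / 10) (hinj : Function.Injective e)
    (k l : Fin (2 * d)) (i j : Fin n) :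
    gaRel (a := a) (.vT k i) (.vT l j) ∨ gaRel (a := a) (.vT l j) (.vT k i) ↔
      dist (gaCenter (a := a) e (.vT k i)) (gaCenter (a := a) e (.vT l j)) ≤ 1 := by
  have key := chain_close_iff k l (he i) (he j)
  rw [hinj.eq_iff, hinj.eq_iff] at key
  simp only [dist_fin_three_le_one, gaCenter, Matrix.cons_val, key, gaRel, Fin.ext_iff]
  omega

theorem vB_vB_close_iff (he : ∀ i, 0 ≤ e i ∧ e i < 1 / 10) (hinj : Function.Injective e)
    (k l : Fin (2 * d)) (i j : Fin n) :
    gaRel (a := a) (.vB k i) (.vB l j) ∨ gaRel (a := a) (.vB l j) (.vB k i) ↔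
      dist (gaCenter (a := a) e (.vB k i)) (gaCenter (a := a) e (.vB l j)) ≤ 1 := by
  have key := chain_close_iff (k + 1) (l + 1) (he i) (he j)
  rw [hinj.eq_iff, hinj.eq_iff] at key
  have hz : |18 / 5 - e i - (18 / 5 - e j)| = |e i - e j| := by
    rw [sub_sub_sub_cancel_left, abs_sub_comm]
  simp only [dist_fin_three_le_one, gaCenter, Matrix.cons_val, hz, key, gaRel, Fin.ext_iff]
  omega

theorem mT_vT_close_iff (he : ∀ i, 0 ≤ e i ∧ e i < 1 / 10) (hinj : Function.Injective e)
    (k : Fin d) (l : Fin (2 * d)) (i j : Fin n) (hi : a i k = true) :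
    gaRel (a := a) (.mT k i hi) (.vT l j) ∨ gaRel (a := a) (.vT l j) (.mT k i hi) ↔
      dist (gaCenter (a := a) e (.mT k i hi)) (gaCenter (a := a) e (.vT l j)) ≤ 1 := by
  have key := hook_close_iff k l (he i) (he j)
  rw [hinj.eq_iff] at key
  simp only [dist_fin_three_le_one, gaCenter, Matrix.cons_val, key, gaRel, or_false]

theorem mB_vB_close_iff (he : ∀ i, 0 ≤ e i ∧ e i < 1 / 10) (hinj : Function.Injective e)
    (k : Fin d) (l : Fin (2 * d)) (i j : Fin n) (hi : a i k = true) :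
    gaRel (a := a) (.mB k i hi) (.vB l j) ∨ gaRel (a := a) (.vB l j) (.mB k i hi) ↔
      dist (gaCenter (a := a) e (.mB k i hi)) (gaCenter (a := a) e (.vB l j)) ≤ 1 := by
  have key := hook_close_iff k (l + 1) (he i) (he j)
  rw [hinj.eq_iff] at key
  have hz : |13 / 5 - e i - (18 / 5 - e j)| = |1 + e i - e j| := by
    rw [← abs_neg]
    ring_nf
  simp only [dist_fin_three_le_one, gaCenter, Matrix.cons_val, hz, key, gaRel, or_false]
  omega

theorem mT_mT_close_iff (he : ∀ i, 0 ≤ e i ∧ e i < 1 / 10)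
    (k l : Fin d) (i j : Fin n) (hi : a i k = true) (hj : a j l = true) :
    gaRel (a := a) (.mT k i hi) (.mT l j hj) ∨ gaRel (a := a) (.mT l j hj) (.mT k i hi) ↔
      dist (gaCenter (a := a) e (.mT k i hi)) (gaCenter (a := a) e (.mT l j hj)) ≤ 1 := by
  have hz : |1 + e i - (1 + e j)| ≤ 1 := by
    have hi := he i
    have hj := he j
    rw [abs_le]
    constructor <;> linarith
  have key := middle_close_iff k l (he i) (he j) hz
  simp only [dist_fin_three_le_one, gaCenter, Matrix.cons_val, key, gaRel, Fin.ext_iff]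
  omega

theorem mB_mB_close_iff (he : ∀ i, 0 ≤ e i ∧ e i < 1 / 10)
    (k l : Fin d) (i j : Fin n) (hi : a i k = true) (hj : a j l = true) :
    gaRel (a := a) (.mB k i hi) (.mB l j hj) ∨ gaRel (a := a) (.mB l j hj) (.mB k i hi) ↔
      dist (gaCenter (a := a) e (.mB k i hi)) (gaCenter (a := a) e (.mB l j hj)) ≤ 1 := by
  have hz : |13 / 5 - e i - (13 / 5 - e j)| ≤ 1 := by
    have hi := he i
    have hj := he j
    rw [abs_le]
    constructor <;> linarith
  have key := middle_close_iff k l (he i) (he j) hz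
  simp only [dist_fin_three_le_one, gaCenter, Matrix.cons_val, key, gaRel, Fin.ext_iff]
  omega

theorem q_mT_close_iff (he : ∀ i, 0 ≤ e i ∧ e i < 1 / 10)
    (k l : Fin d) (j : Fin n) (hj : a j l = true) :
    gaRel (a := a) (.q k) (.mT l j hj) ∨ gaRel (a := a) (.mT l j hj) (.q k) ↔
      dist (gaCenter (a := a) e (.q k)) (gaCenter (a := a) e (.mT l j hj)) ≤ 1 := by
  have hz : |9 / 5 - (1 + e j)| ≤ 1 := by
    have hj := he j
    rw [abs_le]
    constructor <;> linarith
  have key := middle_close_iff k l (s := 0) (by norm_num) (he j) hz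
  rw [sub_zero] at key
  simp only [dist_fin_three_le_one, gaCenter, Matrix.cons_val, key, gaRel, Fin.ext_iff, or_false]

theorem q_mB_close_iff (he : ∀ i, 0 ≤ e i ∧ e i < 1 / 10)
    (k l : Fin d) (j : Fin n) (hj : a j l = true) :
    gaRel (a := a) (.q k) (.mB l j hj) ∨ gaRel (a := a) (.mB l j hj) (.q k) ↔
      dist (gaCenter (a := a) e (.q k)) (gaCenter (a := a) e (.mB l j hj)) ≤ 1 := by
  have hz : |9 / 5 - (13 / 5 - e j)| ≤ 1 := by
    have hj := he j
    rw [abs_le]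
    constructor <;> linarith
  have key := middle_close_iff k l (s := 0) (by norm_num) (he j) hz
  rw [sub_zero] at key
  simp only [dist_fin_three_le_one, gaCenter, Matrix.cons_val, key, gaRel, Fin.ext_iff, or_false]

theorem one_lt_dist_q_q {k l : Fin d} (hkl : k ≠ l) :
    ¬ dist (gaCenter (a := a) e (.q k)) (gaCenter (a := a) e (.q l)) ≤ 1 := by
  have key := middle_close_iff k l (s := 0) (t := 0) (z := 9 / 5 - 9 / 5)
    (by norm_num) (by norm_num) (by norm_num)
  rw [sub_zero, sub_zero] at key
  simpa only [dist_fin_three_le_one, gaCenter, Matrix.cons_val, key, ← Fin.ext_iff] using hkl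

theorem gaRel_or_gaRel_iff_close (he : ∀ i, 0 ≤ e i ∧ e i < 1 / 10) (hinj : Function.Injective e)
    {u v : GAVert n d a} (huv : u ≠ v) :
    gaRel u v ∨ gaRel v u ↔ dist (gaCenter e u) (gaCenter e v) ≤ 1 := by
  have far {u v : GAVert n d a} (huv : ¬ gaRel u v) (hvu : ¬ gaRel v u)
      (h : 1 < gaCenter e u 2 - gaCenter e v 2 ∨ 1 < gaCenter e v 2 - gaCenter e u 2) :
      gaRel u v ∨ gaRel v u ↔ dist (gaCenter e u) (gaCenter e v) ≤ 1 := by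
    rw [dist_fin_three_le_one, abs_le (a := gaCenter e u 2 - gaCenter e v 2)]
    refine iff_of_false (not_or.2 ⟨huv, hvu⟩) ?_
    rintro ⟨-, -, h1, h2⟩
    rcases h with h | h <;> linarith
  rcases u with ⟨k, i⟩ | ⟨k, i⟩ | ⟨k, i, hi⟩ | ⟨k, i, hi⟩ | k <;>
    rcases v with ⟨l, j⟩ | ⟨l, j⟩ | ⟨l, j, hj⟩ | ⟨l, j, hj⟩ | l <;>
    first
    | with_reducible exact vT_vT_close_iff he hinj k l i j
    | with_reducible exact vB_vB_close_iff he hinj k l i j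
    | with_reducible exact mT_vT_close_iff he hinj k l i j hi
    | with_reducible exact mB_vB_close_iff he hinj k l i j hi
    | with_reducible exact mT_mT_close_iff he k l i j hi hj
    | with_reducible exact mB_mB_close_iff he k l i j hi hj
    | with_reducible exact q_mT_close_iff he k l j hj
    | with_reducible exact q_mB_close_iff he k l j hj
    | rw [or_comm, dist_comm]
      first
      | with_reducible exact mT_vT_close_iff he hinj l k j i hj
      | with_reducible exact mB_vB_close_iff he hinj l k j i hj
      | with_reducible exact q_mT_close_iff he l k i hi
      | with_reducible exact q_mB_close_iff he l k i hi
    | refine far id id ?_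
      simp only [gaCenter, Matrix.cons_val]
      try have hi' := he i
      try have hj' := he j
      first
      | left; linarith
      | right; linarith
    | exact iff_of_false (or_self_iff.not.2 id) (one_lt_dist_q_q fun h => huv (h ▸ rfl))

end Center

/-- `G(A)` can be realized as an intersection graph of axis-parallel unit
cubes in `ℝ³`: there is an injective assignment of centers such that two distinct vertices
are adjacent iff their centers are at `ℓ∞`-distance at most `1` (the distance on `Fin 3 → ℝ`
is the sup-metric). -/
theorem gaGraph_realizable_unit_cubes (n d : ℕ) (hn : 1 ≤ n) (hd : 1 ≤ d)
    (a : Fin n → Fin d → Bool) (hall : ∃ i₀ : Fin n, ∀ k : Fin d, a i₀ k = true) :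
    ∃ c : GAVert n d a → (Fin 3 → ℝ),
      Function.Injective c ∧
      ∀ u v : GAVert n d a, u ≠ v →
        ((gaGraph n d a).Adj u v ↔ dist (c u) (c v) ≤ 1) := by
  have hpos : (0 : ℝ) < n := by exact_mod_cast hn
  let e : Fin n → ℝ := fun i => (i : ℕ) / (10 * n)
  have he : ∀ i, 0 ≤ e i ∧ e i < 1 / 10 := fun i => by
    have hi : ((i : ℕ) : ℝ) < n := by exact_mod_cast i.2
    refine ⟨by positivity, ?_⟩
    simp only [e]
    rw [div_lt_div_iff₀ (by positivity) (by norm_num)]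
    linarith
  have hinj : Function.Injective e := fun i j hij => by
    simp only [e] at hij
    rw [div_left_inj' (by positivity)] at hij
    exact Fin.ext (by exact_mod_cast hij)
  refine ⟨gaCenter e, gaCenter_injective he hinj, fun u v huv => ?_⟩
  rw [gaGraph, SimpleGraph.fromRel_adj, gaRel_or_gaRel_iff_close he hinj huv]
  exact and_iff_right huv
end
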